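/- arXiv:math/0003049 — 3 statements merged into one kernel-verified Lean document; each statement's English description precedes it below -/
import Mathlib

section
/- The entropy-shock and non-entropy-shock profiles at the origin are invariant under the macroscopic dynamics: with v^e_0(x) = ρ*·x for x < 0 and v^e_0(x) = (1−ρ*)·x for x ≥ 0, the variational formula gives v^e(x,t) = v^e_0(x) − t·c/4 for all x ∈ ℝ and t > 0; and with v^n_0(x) = (1−ρ*)·x for x < 0 and v^n_0(x) = ρ*·x for x ≥ 0, it gives v^n(x,t) = v^n_0(x) − t·c/4 for all x ∈ ℝ and t > 0. -/
/-!
Both profiles have the form `φ(y) = a y` for `y < 0`, `φ(y) = b y` for `y ≥ 0`, where `a` and `b`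
are the two roots of `f₀ = c/4`.

*Upper bound.* By Legendre duality, `λ g₀(w'/λ) ≥ λ f₀(ρ) − w' ρ` for every `ρ ∈ [0,1]`. Where
`w ≠ 0`, taking `ρ = φ'(w)` bounds the running cost below by `c/4 − (φ ∘ w)'`. At almost every
time with `w = 0` the function `|w|` is differentiable with a minimum, so `w' = 0` and
`(φ ∘ w)' = 0`, while the cost is exactly `c g₀(0) = c/4`. Since `φ ∘ w` is Lipschitz on each
cell, integrating gives `cost ≥ t c/4 + φ(w 0) − φ(w t)` for every admissible path
(`pathCost_ge`). This argument does not see the order of `a` and `b`, hence covers both profiles.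

*Attainment.* Equality holds along characteristics, of speed `f₀'(φ'(w)) = ± (1 − 2ρ*)`. For the
entropy shock the backward characteristic from `x` moves away from the origin; for the
non-entropy shock it moves towards the origin, and upon reaching it the optimal path stays there,
paying `c/4` per unit time.
-/

open Filter Set MeasureTheory intervalIntegral

/-- The Legendre conjugate `g₀` of the TASEP flux `f₀(ρ) = ρ(1−ρ)`:
`g₀(x) = −x` for `x ≤ −1`, `(1−x)²/4` for `−1 ≤ x ≤ 1`, and `0` for `x ≥ 1`. -/
noncomputable def g0 (x : ℝ) : ℝ :=
  if x ≤ -1 then -x else if x ≤ 1 then (1 - x) ^ 2 / 4 else 0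

/-- The macroscopic rate profile: `λ(x) = 1` for `x ≠ 0` and `λ(0) = c`. -/
noncomputable def lam (c : ℝ) (x : ℝ) : ℝ := if x = 0 then c else 1

/-- `w` is piecewise `C¹` on `[a,b]`: continuous on `[a,b]` and `C¹` on each cell of
some finite partition `a = p 0 < p 1 < ⋯ < p k = b`. -/
def PiecewiseC1On (w : ℝ → ℝ) (a b : ℝ) : Prop :=
  ContinuousOn w (Set.Icc a b) ∧
    ∃ (k : ℕ) (p : ℕ → ℝ), p 0 = a ∧ p k = b ∧ (∀ i < k, p i < p (i + 1)) ∧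
      ∀ i < k, ContDiffOn ℝ 1 w (Set.Icc (p i) (p (i + 1)))

/-- The running cost `∫₀ᵗ λ(w(s)) g₀(w′(s)/λ(w(s))) ds` of a path `w : [0,t] → ℝ`. -/
noncomputable def pathCost (c t : ℝ) (w : ℝ → ℝ) : ℝ :=
  ∫ s in (0 : ℝ)..t, lam c (w s) * g0 (deriv w s / lam c (w s))

/-- The variational (Hopf–Lax type) solution
`v(x,t) = sup { v₀(w(0)) − ∫₀ᵗ λ(w(s)) g₀(w′(s)/λ(w(s))) ds : w piecewise C¹, w(t) = x }`. -/
noncomputable def vVar (c : ℝ) (v0 : ℝ → ℝ) (x t : ℝ) : ℝ :=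
  sSup { a | ∃ w : ℝ → ℝ, PiecewiseC1On w 0 t ∧ w t = x ∧ a = v0 (w 0) - pathCost c t w }

/-- The optimal control cost
`I(x,t,q) = inf { ∫₀ᵗ λ(w(s)) g₀(w′(s)/λ(w(s))) ds : w piecewise C¹, w(0) = q, w(t) = x }`. -/
noncomputable def Icost (c : ℝ) (x t q : ℝ) : ℝ :=
  sInf { a | ∃ w : ℝ → ℝ, PiecewiseC1On w 0 t ∧ w 0 = q ∧ w t = x ∧ a = pathCost c t w }

/-! ### Legendre duality and measurability -/

/-- The Young-type inequality `g₀(y) ≥ f₀(ρ) − yρ` for `ρ ∈ [0,1]`. -/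
lemma g0_ge {a : ℝ} (h0 : 0 ≤ a) (h1 : a ≤ 1) (y : ℝ) : a * (1 - a) - y * a ≤ g0 y := by
  unfold g0
  split_ifs with h h'
  · nlinarith
  · nlinarith [sq_nonneg (1 - y - 2 * a)]
  · nlinarith

lemma g0_nonneg (y : ℝ) : 0 ≤ g0 y := by
  simpa using g0_ge le_rfl zero_le_one y

lemma g0_le (y : ℝ) : g0 y ≤ 1 + |y| := by
  unfold g0
  split_ifs with h h'
  · linarith [neg_le_abs y]
  · have := abs_nonneg y
    nlinarith
  · positivity

lemma g0_of_mem {y : ℝ} (h : -1 ≤ y) (h' : y ≤ 1) : g0 y = (1 - y) ^ 2 / 4 := by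
  unfold g0
  split_ifs with h1
  · obtain rfl : y = -1 := le_antisymm h1 h
    norm_num
  · rfl

lemma measurable_g0 : Measurable g0 :=
  Measurable.ite measurableSet_Iic measurable_neg
    (Measurable.ite measurableSet_Iic (by fun_prop) measurable_const)

lemma measurable_lam (c : ℝ) : Measurable (lam c) :=
  Measurable.ite (measurableSet_singleton 0) measurable_const measurable_const

/-! ### The lower bound on the cost of a path -/

/-- Where `w = 0` and `|w|` is differentiable, `|w|` has a minimum, so both derivatives vanish. -/
lemma deriv_zero_of_abs {w : ℝ → ℝ} {s : ℝ} (h0 : w s = 0)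
    (hd : DifferentiableAt ℝ (fun u => |w u|) s) :
    deriv (fun u => |w u|) s = 0 ∧ deriv w s = 0 := by
  have h1 : deriv (fun u => |w u|) s = 0 := by
    apply IsLocalMin.deriv_eq_zero
    filter_upwards with u
    simp [h0]
  have h2 : HasDerivAt (fun u => |w u|) 0 s := h1 ▸ hd.hasDerivAt
  refine ⟨h1, HasDerivAt.deriv ?_⟩
  rw [hasDerivAt_iff_isLittleO] at h2 ⊢
  simp only [h0, abs_zero, smul_zero, sub_zero] at h2 ⊢
  exact (Asymptotics.isLittleO_norm_left (f' := w)).1 h2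

/-- The pointwise inequality `λ g₀(w'/λ) ≥ c/4 − (φ ∘ w)'`, with `φ` written as
`φ(y) = (a+b)/2 * y + (b-a)/2 * |y|`. -/
lemma integrand_ge {a b c : ℝ} (ha : a ∈ Icc (0 : ℝ) 1) (hb : b ∈ Icc (0 : ℝ) 1)
    (hac : a * (1 - a) = c / 4) (hbc : b * (1 - b) = c / 4)
    {w : ℝ → ℝ} {s : ℝ} (hw : DifferentiableAt ℝ w s)
    (hd : DifferentiableAt ℝ (fun u => |w u|) s) :
    c / 4 - ((a + b) / 2 * deriv w s + (b - a) / 2 * deriv (fun u => |w u|) s)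
      ≤ lam c (w s) * g0 (deriv w s / lam c (w s)) := by
  rcases lt_trichotomy (w s) 0 with h | h | h
  · have e : deriv (fun u => |w u|) s = - deriv w s := by
      have : (fun u => |w u|) =ᶠ[nhds s] fun u => - w u := by
        filter_upwards [hw.continuousAt.eventually_lt_const h] with u hu
        exact abs_of_neg hu
      rw [this.deriv_eq, deriv.fun_neg]
    have := g0_ge ha.1 ha.2 (deriv w s)
    rw [e]
    simp only [lam, h.ne, if_false, div_one, one_mul]
    linarith
  · obtain ⟨h1, h2⟩ := deriv_zero_of_abs h hd
    rw [h1, h2, zero_div, g0_of_mem (by norm_num) (by norm_num)]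
    simp only [lam, h, if_true]
    linarith
  · have e : deriv (fun u => |w u|) s = deriv w s := by
      have : (fun u => |w u|) =ᶠ[nhds s] w := by
        filter_upwards [hw.continuousAt.eventually_const_lt h] with u hu
        exact abs_of_pos hu
      rw [this.deriv_eq]
    have := g0_ge hb.1 hb.2 (deriv w s)
    rw [e]
    simp only [lam, h.ne', if_false, div_one, one_mul]
    linarith

lemma integrand_bound {c : ℝ} (hc : c ∈ Ioc (0 : ℝ) 1) (y m : ℝ) :
    ‖lam c y * g0 (m / lam c y)‖ ≤ 1 + |m| := by
  have hl : 0 < lam c y ∧ lam c y ≤ 1 := by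
    unfold lam
    split_ifs
    · exact hc
    · norm_num
  rw [Real.norm_eq_abs, abs_of_nonneg (mul_nonneg hl.1.le (g0_nonneg _))]
  have := mul_le_mul_of_nonneg_left (g0_le (m / lam c y)) hl.1.le
  rw [abs_div, abs_of_pos hl.1, mul_add, mul_div_cancel₀ _ hl.1.ne'] at this
  linarith

/-- Integrability of the running cost on a cell where `w` is `C¹`, and the integrated lower bound
there. -/
lemma cell_bound {a b c : ℝ} (hc : c ∈ Ioc (0 : ℝ) 1)
    (ha : a ∈ Icc (0 : ℝ) 1) (hb : b ∈ Icc (0 : ℝ) 1)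
    (hac : a * (1 - a) = c / 4) (hbc : b * (1 - b) = c / 4)
    {w : ℝ → ℝ} {p q : ℝ} (hpq : p < q) (hw : ContDiffOn ℝ 1 w (Icc p q)) :
    IntervalIntegrable (fun s => lam c (w s) * g0 (deriv w s / lam c (w s))) volume p q ∧
    (q - p) * (c / 4) - (((a + b) / 2 * w q + (b - a) / 2 * |w q|)
        - ((a + b) / 2 * w p + (b - a) / 2 * |w p|))
      ≤ ∫ s in p..q, lam c (w s) * g0 (deriv w s / lam c (w s)) := by
  obtain ⟨K, hK⟩ := hw.exists_lipschitzOnWith one_ne_zero (convex_Icc p q) isCompact_Icc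
  have hK2 : LipschitzOnWith K (fun u => |w u|) (Icc p q) := by
    refine LipschitzOnWith.of_dist_le_mul fun u hu v hv => ?_
    exact (abs_abs_sub_abs_le_abs_sub (w u) (w v)).trans (hK.dist_le_mul u hu v hv)
  have ac1 : AbsolutelyContinuousOnInterval w p q := by
    apply LipschitzOnWith.absolutelyContinuousOnInterval (K := K)
    rwa [uIcc_of_le hpq.le]
  have ac2 : AbsolutelyContinuousOnInterval (fun u => |w u|) p q := by
    apply LipschitzOnWith.absolutelyContinuousOnInterval (K := K)
    rwa [uIcc_of_le hpq.le]
  have i1 := ac1.intervalIntegrable_deriv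
  have i2 := ac2.intervalIntegrable_deriv
  have hint : IntervalIntegrable (fun s => lam c (w s) * g0 (deriv w s / lam c (w s)))
      volume p q := by
    refine (intervalIntegrable_const (c := (1 : ℝ)).add i1.abs).mono_fun' ?_ ?_
    · have hm : AEMeasurable w (volume.restrict (uIoc p q)) := by
        rw [uIoc_of_le hpq.le]
        exact (hw.continuousOn.mono Ioc_subset_Icc_self).aemeasurable measurableSet_Ioc
      have hl := (measurable_lam c).comp_aemeasurable hm
      exact (hl.mul (measurable_g0.comp_aemeasurable
        ((measurable_deriv w).aemeasurable.div hl))).aestronglyMeasurable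
    · exact Eventually.of_forall fun s => integrand_bound hc _ _
  refine ⟨hint, ?_⟩
  have i3 : IntervalIntegrable (fun s => (a + b) / 2 * deriv w s
      + (b - a) / 2 * deriv (fun u => |w u|) s) volume p q :=
    (i1.const_mul _).add (i2.const_mul _)
  have e : ∫ s in p..q, (c / 4 - ((a + b) / 2 * deriv w s
      + (b - a) / 2 * deriv (fun u => |w u|) s))
      = (q - p) * (c / 4) - (((a + b) / 2 * w q + (b - a) / 2 * |w q|)
        - ((a + b) / 2 * w p + (b - a) / 2 * |w p|)) := by
    rw [intervalIntegral.integral_sub intervalIntegrable_const i3,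
      intervalIntegral.integral_add (i1.const_mul _) (i2.const_mul _),
      intervalIntegral.integral_const_mul, intervalIntegral.integral_const_mul,
      ac1.integral_deriv_eq_sub, ac2.integral_deriv_eq_sub, intervalIntegral.integral_const,
      smul_eq_mul]
    ring
  rw [← e]
  apply intervalIntegral.integral_mono_ae_restrict hpq.le (intervalIntegrable_const.sub i3) hint
  have hne : ∀ᵐ s ∂(volume : Measure ℝ), s ≠ p ∧ s ≠ q := by
    have h1 : ∀ᵐ s ∂(volume : Measure ℝ), s ≠ p := by simp [ae_iff, measure_singleton]
    have h2 : ∀ᵐ s ∂(volume : Measure ℝ), s ≠ q := by simp [ae_iff, measure_singleton]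
    filter_upwards [h1, h2] with s h1 h2 using ⟨h1, h2⟩
  rw [EventuallyLE, ae_restrict_iff' measurableSet_Icc]
  filter_upwards [hne, ac1.ae_differentiableAt, ac2.ae_differentiableAt] with s h1 h2 h3 hs
  rw [← uIcc_of_le hpq.le] at hs
  exact integrand_ge ha hb hac hbc (h2 hs) (h3 hs)

/-- Every admissible path satisfies `cost ≥ t c/4 + φ(w 0) − φ(w t)`. -/
lemma pathCost_ge {a b c t : ℝ} (hc : c ∈ Ioc (0 : ℝ) 1)
    (ha : a ∈ Icc (0 : ℝ) 1) (hb : b ∈ Icc (0 : ℝ) 1)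
    (hac : a * (1 - a) = c / 4) (hbc : b * (1 - b) = c / 4)
    {w : ℝ → ℝ} (hw : PiecewiseC1On w 0 t) :
    t * (c / 4) - (((a + b) / 2 * w t + (b - a) / 2 * |w t|)
        - ((a + b) / 2 * w 0 + (b - a) / 2 * |w 0|)) ≤ pathCost c t w := by
  obtain ⟨-, k, p, hp0, hpk, hlt, hC⟩ := hw
  have key : ∀ n ≤ k,
      IntervalIntegrable (fun s => lam c (w s) * g0 (deriv w s / lam c (w s))) volume 0 (p n) ∧
      p n * (c / 4) - (((a + b) / 2 * w (p n) + (b - a) / 2 * |w (p n)|)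
        - ((a + b) / 2 * w 0 + (b - a) / 2 * |w 0|))
      ≤ ∫ s in (0 : ℝ)..p n, lam c (w s) * g0 (deriv w s / lam c (w s)) := by
    intro n
    induction n with
    | zero => intro _; simp [hp0]
    | succ n ih =>
      intro hn
      obtain ⟨h1, h2⟩ := ih (by omega)
      obtain ⟨h3, h4⟩ := cell_bound hc ha hb hac hbc (hlt n (by omega)) (hC n (by omega))
      refine ⟨h1.trans h3, ?_⟩
      rw [← intervalIntegral.integral_add_adjacent_intervals h1 h3]
      linarith
  have := (key k le_rfl).2
  rwa [hpk] at this

/-! ### Cost of characteristics and of the path resting at the origin -/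

lemma integrand_linear {c α β x m : ℝ} {w : ℝ → ℝ}
    (hw : ∀ s ∈ Ioo α β, w s = x + m * s) (h0 : ∀ s ∈ Ioo α β, w s ≠ 0) :
    EqOn (fun s => lam c (w s) * g0 (deriv w s / lam c (w s))) (fun _ => g0 m) (Ioo α β) := by
  intro s hs
  have hd : deriv w s = m := by
    have : w =ᶠ[nhds s] fun u => x + m * u := by
      filter_upwards [Ioo_mem_nhds hs.1 hs.2] with u hu using hw u hu
    rw [this.deriv_eq]
    simp
  simp [lam, h0 s hs, hd]

lemma integrand_rest {c α β : ℝ} {w : ℝ → ℝ} (hw : ∀ s ∈ Ioo α β, w s = 0) :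
    EqOn (fun s => lam c (w s) * g0 (deriv w s / lam c (w s))) (fun _ => c / 4) (Ioo α β) := by
  intro s hs
  have hd : deriv w s = 0 := by
    have : w =ᶠ[nhds s] fun _ => 0 := by
      filter_upwards [Ioo_mem_nhds hs.1 hs.2] with u hu using hw u hu
    rw [this.deriv_eq]
    simp
  simp only [lam, hw s hs, hd, if_true, zero_div, g0_of_mem (y := 0) (by norm_num) (by norm_num)]
  ring

lemma integral_of_eqOn_Ioo {f : ℝ → ℝ} {α β k : ℝ} (h : α ≤ β)
    (hf : EqOn f (fun _ => k) (Ioo α β)) :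
    IntervalIntegrable f volume α β ∧ ∫ s in α..β, f s = (β - α) * k := by
  constructor
  · rw [intervalIntegrable_iff_integrableOn_Ioo_of_le h]
    exact (integrableOn_const (C := k) (by simp)).congr_fun hf.symm measurableSet_Ioo
  · rw [intervalIntegral.integral_of_le h, integral_Ioc_eq_integral_Ioo,
      setIntegral_congr_fun measurableSet_Ioo hf, ← integral_Ioc_eq_integral_Ioo,
      ← intervalIntegral.integral_of_le h, intervalIntegral.integral_const, smul_eq_mul]

lemma piecewiseC1On_of_contDiff {w : ℝ → ℝ} {t : ℝ} (ht : 0 < t) (hw : ContDiff ℝ 1 w) :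
    PiecewiseC1On w 0 t := by
  refine ⟨hw.continuous.continuousOn, 1, fun i => if i = 0 then 0 else t, by simp, by simp, ?_, ?_⟩
  · intro i hi
    obtain rfl : i = 0 := by omega
    simpa using ht
  · intro i _
    exact hw.contDiffOn

/-- A characteristic of speed `m` through `(x, t)` that avoids the origin on `(0, t)`. -/
lemma exists_path_linear {x m t : ℝ} (c : ℝ) (ht : 0 < t)
    (h : ∀ s ∈ Ioo 0 t, x - m * (t - s) ≠ 0) :
    ∃ w : ℝ → ℝ, PiecewiseC1On w 0 t ∧ w t = x ∧ w 0 = x - m * t ∧ pathCost c t w = t * g0 m := by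
  refine ⟨fun s => x - m * (t - s), piecewiseC1On_of_contDiff ht (by fun_prop), by simp, by simp,
    ?_⟩
  have := (integral_of_eqOn_Ioo ht.le (integrand_linear (c := c) (x := x - m * t) (m := m)
    (w := fun s => x - m * (t - s)) (fun s _ => by ring) h)).2
  simpa [pathCost] using this

lemma exists_path_rest {t : ℝ} (c : ℝ) (ht : 0 < t) :
    ∃ w : ℝ → ℝ, PiecewiseC1On w 0 t ∧ w t = 0 ∧ w 0 = 0 ∧ pathCost c t w = t * (c / 4) := by
  refine ⟨fun _ => 0, piecewiseC1On_of_contDiff ht contDiff_const, rfl, rfl, ?_⟩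
  have := (integral_of_eqOn_Ioo ht.le (integrand_rest (c := c) (w := fun _ => (0 : ℝ))
    (fun _ _ => rfl))).2
  simpa [pathCost] using this

/-- The path resting at the origin until time `τ`, and then leaving it at speed `m`. -/
lemma exists_path_leave {m t τ : ℝ} (c : ℝ) (h0 : 0 < τ) (hτ : τ < t) (hm : m ≠ 0) :
    ∃ w : ℝ → ℝ, PiecewiseC1On w 0 t ∧ w t = m * (t - τ) ∧ w 0 = 0 ∧
      pathCost c t w = τ * (c / 4) + (t - τ) * g0 m := by
  have hl : ∀ s ≤ τ, m * max (s - τ) 0 = 0 := fun s hs => by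
    rw [max_eq_right (by linarith), mul_zero]
  have hr : ∀ s, τ ≤ s → m * max (s - τ) 0 = -(m * τ) + m * s := fun s hs => by
    rw [max_eq_left (by linarith)]
    ring
  refine ⟨fun s => m * max (s - τ) 0, ⟨by fun_prop, 2,
    fun i => if i = 0 then 0 else if i = 1 then τ else t, by simp, by simp, ?_, ?_⟩, ?_, ?_, ?_⟩
  · intro i hi
    interval_cases i
    · simpa using h0
    · simpa using hτ
  · intro i hi
    interval_cases i
    · exact (contDiffOn_const (c := (0 : ℝ))).congr fun s hs => hl s (by simpa using hs.2)
    · have : ContDiff ℝ 1 fun s : ℝ => -(m * τ) + m * s := by fun_prop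
      exact this.contDiffOn.congr fun s hs => hr s (by simpa using hs.1)
  · exact (hr t hτ.le).trans (by ring)
  · exact hl 0 h0.le
  · obtain ⟨j1, e1⟩ := integral_of_eqOn_Ioo h0.le (integrand_rest (c := c)
      (w := fun s => m * max (s - τ) 0) fun s hs => hl s hs.2.le)
    obtain ⟨j2, e2⟩ := integral_of_eqOn_Ioo hτ.le (integrand_linear (c := c)
      (w := fun s => m * max (s - τ) 0) (fun s hs => hr s hs.1.le) fun s hs => by
        have : 0 < s - τ := sub_pos.2 hs.1
        rw [max_eq_left this.le]
        exact mul_ne_zero hm this.ne')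
    rw [pathCost, ← intervalIntegral.integral_add_adjacent_intervals j1 j2, e1, e2]
    ring

/-! ### Invariance of the profiles -/

/-- For a profile with slopes `a`, `b` satisfying `f₀(a) = f₀(b) = c/4`, a single path attaining
the upper bound determines the value of the variational formula. -/
lemma vVar_eq_of_path {a b c x t : ℝ} (hc : c ∈ Ioc (0 : ℝ) 1)
    (ha : a ∈ Icc (0 : ℝ) 1) (hb : b ∈ Icc (0 : ℝ) 1)
    (hac : a * (1 - a) = c / 4) (hbc : b * (1 - b) = c / 4)
    {v0 : ℝ → ℝ} (hv : ∀ y, v0 y = if y < 0 then a * y else b * y)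
    (h : ∃ w : ℝ → ℝ, PiecewiseC1On w 0 t ∧ w t = x ∧ v0 (w 0) - pathCost c t w
      = v0 x - t * c / 4) :
    vVar c v0 x t = v0 x - t * c / 4 := by
  have hv' : ∀ y, v0 y = (a + b) / 2 * y + (b - a) / 2 * |y| := by
    intro y
    rw [hv]
    split_ifs with hy
    · rw [abs_of_neg hy]
      ring
    · rw [abs_of_nonneg (not_lt.1 hy)]
      ring
  apply IsGreatest.csSup_eq
  constructor
  · obtain ⟨w, h1, h2, h3⟩ := h
    exact ⟨w, h1, h2, h3.symm⟩
  · rintro _ ⟨w, h1, h2, rfl⟩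
    have := pathCost_ge hc ha hb hac hbc h1
    rw [h2] at this
    rw [hv', hv']
    linarith

/-- the entropy shock profile `v₀ᵉ` and the non-entropy shock profile `v₀ⁿ`
at the origin are invariant: the variational formula gives
`vᵉ(x,t) = v₀ᵉ(x) − tc/4` and `vⁿ(x,t) = v₀ⁿ(x) − tc/4`. -/
theorem shock_profiles_invariant
    (c : ℝ) (hc : c ∈ Set.Ioc (0 : ℝ) 1)
    (ρs : ℝ) (hρs : ρs = 1 / 2 - Real.sqrt (1 - c) / 2)
    (ve0 vn0 : ℝ → ℝ)
    (hve0 : ∀ x, ve0 x = if x < 0 then ρs * x else (1 - ρs) * x)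
    (hvn0 : ∀ x, vn0 x = if x < 0 then (1 - ρs) * x else ρs * x)
    (x t : ℝ) (ht : 0 < t) :
    vVar c ve0 x t = ve0 x - t * c / 4 ∧ vVar c vn0 x t = vn0 x - t * c / 4 := by
  -- `r = √(1 - c) = 1 - 2ρ*` is the characteristic speed
  have hr0 : 0 ≤ 1 - 2 * ρs := by
    have := Real.sqrt_nonneg (1 - c)
    linarith
  have hsq : (1 - 2 * ρs) ^ 2 = 1 - c := by
    have := Real.sq_sqrt (sub_nonneg.2 hc.2)
    rw [hρs]
    linarith
  have hcρ : ρs * (1 - ρs) = c / 4 := by linarith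
  have hcρ' : (1 - ρs) * (1 - (1 - ρs)) = c / 4 := by linarith
  have hρ0 : 0 ≤ ρs := by nlinarith [hc.1]
  have m1 : ρs ∈ Icc (0 : ℝ) 1 := ⟨hρ0, by linarith⟩
  have m2 : 1 - ρs ∈ Icc (0 : ℝ) 1 := ⟨by linarith, by linarith⟩
  have hg1 : g0 (1 - 2 * ρs) = ρs ^ 2 := by
    rw [g0_of_mem (by linarith) (by linarith)]
    ring
  have hg2 : g0 (-(1 - 2 * ρs)) = (1 - ρs) ^ 2 := by
    rw [g0_of_mem (by linarith) (by linarith)]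
    ring
  have hc4 : c = 4 * (ρs * (1 - ρs)) := by linarith
  constructor
  · refine vVar_eq_of_path hc m1 m2 hcρ hcρ' hve0 ?_
    rcases lt_trichotomy x 0 with hx | rfl | hx
    · obtain ⟨w, h1, h2, h3, h4⟩ := exists_path_linear (x := x) (m := 1 - 2 * ρs) c ht
        (fun s hs => by
          have := mul_nonneg hr0 (sub_nonneg.2 hs.2.le)
          linarith)
      refine ⟨w, h1, h2, ?_⟩
      have := mul_nonneg hr0 ht.le
      rw [h3, h4, hg1, hve0, hve0, if_pos hx, if_pos (by linarith), hc4]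
      ring
    · obtain ⟨w, h1, h2, h3, h4⟩ := exists_path_rest c ht
      refine ⟨w, h1, h2, ?_⟩
      rw [h3, h4]
      ring
    · obtain ⟨w, h1, h2, h3, h4⟩ := exists_path_linear (x := x) (m := -(1 - 2 * ρs)) c ht
        (fun s hs => by
          have := mul_nonneg hr0 (sub_nonneg.2 hs.2.le)
          linarith)
      refine ⟨w, h1, h2, ?_⟩
      have := mul_nonneg hr0 ht.le
      rw [h3, h4, hg2, hve0, hve0, if_neg (by linarith), if_neg (by linarith), hc4]
      ring
  · refine vVar_eq_of_path hc m2 m1 hcρ' hcρ hvn0 ?_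
    rcases lt_trichotomy x 0 with hx | rfl | hx
    · rcases le_or_gt ((1 - 2 * ρs) * t) (-x) with hle | hlt
      · obtain ⟨w, h1, h2, h3, h4⟩ := exists_path_linear (x := x) (m := -(1 - 2 * ρs)) c ht
          (fun s hs => by
            rcases hr0.eq_or_lt with h | h
            · rw [← h]
              linarith
            · have := mul_pos h hs.1
              linarith)
        refine ⟨w, h1, h2, ?_⟩
        rw [h3, h4, hg2, hvn0, hvn0, if_pos hx, hc4]
        split_ifs with h
        · ring
        · have : (1 - 2 * ρs) * t = -x := by linarith
          linear_combination (-(1 - 2 * ρs)) * this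
      · have hr : 0 < 1 - 2 * ρs := by
          by_contra! h
          nlinarith
        have hd : (1 - 2 * ρs) * (-x / (1 - 2 * ρs)) = -x := mul_div_cancel₀ _ hr.ne'
        obtain ⟨w, h1, h2, h3, h4⟩ := exists_path_leave (m := -(1 - 2 * ρs)) (t := t)
          (τ := t - -x / (1 - 2 * ρs)) c
          (by rw [sub_pos, div_lt_iff₀ hr]; linarith)
          (by linarith [div_pos (neg_pos.2 hx) hr]) (by linarith)
        refine ⟨w, h1, by rw [h2]; linarith, ?_⟩
        rw [h3, h4, hg2, hvn0, hvn0, if_pos hx, if_neg (lt_irrefl 0), hc4]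
        linear_combination (-(1 - ρs)) * hd
    · obtain ⟨w, h1, h2, h3, h4⟩ := exists_path_rest c ht
      refine ⟨w, h1, h2, ?_⟩
      rw [h3, h4]
      ring
    · rcases le_or_gt ((1 - 2 * ρs) * t) x with hle | hlt
      · obtain ⟨w, h1, h2, h3, h4⟩ := exists_path_linear (x := x) (m := 1 - 2 * ρs) c ht
          (fun s hs => by
            rcases hr0.eq_or_lt with h | h
            · rw [← h]
              linarith
            · have := mul_pos h hs.1
              linarith)
        refine ⟨w, h1, h2, ?_⟩
        rw [h3, h4, hg1, hvn0, hvn0, if_neg (by linarith), if_neg (by linarith), hc4]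
        ring
      · have hr : 0 < 1 - 2 * ρs := by
          by_contra! h
          nlinarith
        have hd : (1 - 2 * ρs) * (x / (1 - 2 * ρs)) = x := mul_div_cancel₀ _ hr.ne'
        obtain ⟨w, h1, h2, h3, h4⟩ := exists_path_leave (m := 1 - 2 * ρs) (t := t)
          (τ := t - x / (1 - 2 * ρs)) c
          (by rw [sub_pos, div_lt_iff₀ hr]; linarith)
          (by linarith [div_pos hx hr]) hr.ne'
        refine ⟨w, h1, by rw [h2]; linarith, ?_⟩
        rw [h3, h4, hg1, hvn0, hvn0, if_neg (lt_irrefl 0), if_neg (by linarith), hc4]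
        linear_combination ρs * hd
end

section
/- For any nonnegative weights {c_v : v ∈ 𝓛} and any u ∈ 𝓛, the maximum of Σ_{v∈π} c_v over lattice paths π from (0,1) to u whose steps are (1,0), (0,1) or (−1,1) equals the maximum over the smaller class of paths whose steps are only (1,0) or (−1,1); that is, every (0,1) step can be replaced by a (1,0) step followed by a (−1,1) step without decreasing the weight of the path. -/
/-!
The step `(0,1)` is the sum of `(1,0)` and `(-1,1)`, and the intermediate point, one unit to the
right of a point of the wedge, is again in the wedge. Inserting it into a path only adds a
nonnegative term to the weight, so every three-step path is dominated by a two-step path with the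
same endpoint (`IsWedgePath.exists_two_step_ge`, by induction on the length). Conversely every
two-step path is a three-step path. The two sets of weights therefore dominate each other
elementwise, and this forces equality of their suprema.
-/

open Filter Set

/-- The lattice wedge `𝓛 = {(i,j) ∈ ℤ² : j ≥ 1, i ≥ −j+1}`. -/
def WedgeL : Set (ℤ × ℤ) := { u | 1 ≤ u.2 ∧ -u.2 + 1 ≤ u.1 }

/-- `π` is a lattice path of `len` steps from `(0,1)` to `u` staying in `𝓛`,
with steps `(1,0)`, `(0,1)` or `(−1,1)`. -/
def IsWedgePath (u : ℤ × ℤ) (len : ℕ) (π : ℕ → ℤ × ℤ) : Prop :=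
  π 0 = (0, 1) ∧ π len = u ∧ (∀ k ≤ len, π k ∈ WedgeL) ∧
    ∀ k < len,
      π (k + 1) - π k = (1, 0) ∨ π (k + 1) - π k = (0, 1) ∨ π (k + 1) - π k = (-1, 1)

/-- The wedge weight `ω^m_{i,j}`: `1/r` in the defect column `i = m`, else `1`. -/
noncomputable def wedgeWeight (r : ℝ) (m : ℤ) (u : ℤ × ℤ) : ℝ := if u.1 = m then 1 / r else 1

/-- The wedge last-passage time `T^m(u)`: the maximal `ω^m`-weighted sum of the values `τ`
collected along a wedge path from `(0,1)` to `u`. -/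
noncomputable def wedgeT (r : ℝ) (m : ℤ) (τ : ℤ × ℤ → ℝ) (u : ℤ × ℤ) : ℝ :=
  sSup { S | ∃ (len : ℕ) (π : ℕ → ℤ × ℤ), IsWedgePath u len π ∧
    S = ∑ k ∈ Finset.range (len + 1), wedgeWeight r m (π k) * τ (π k) }

/-- `π` is a lattice path of `len` steps from `(0,1)` to `u` staying in `𝓛`,
using only the steps `(1,0)` and `(−1,1)`. -/
def IsWedgePath2 (u : ℤ × ℤ) (len : ℕ) (π : ℕ → ℤ × ℤ) : Prop :=
  π 0 = (0, 1) ∧ π len = u ∧ (∀ k ≤ len, π k ∈ WedgeL) ∧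
    ∀ k < len, π (k + 1) - π k = (1, 0) ∨ π (k + 1) - π k = (-1, 1)

lemma IsWedgePath2.isWedgePath {u : ℤ × ℤ} {len : ℕ} {π : ℕ → ℤ × ℤ}
    (h : IsWedgePath2 u len π) : IsWedgePath u len π :=
  ⟨h.1, h.2.1, h.2.2.1, fun k hk => (h.2.2.2 k hk).imp_right Or.inr⟩

/-- Dropping the last step of a three-step path leaves a three-step path. -/
lemma IsWedgePath.init {u : ℤ × ℤ} {len : ℕ} {π : ℕ → ℤ × ℤ}
    (h : IsWedgePath u (len + 1) π) : IsWedgePath (π len) len π :=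
  ⟨h.1, rfl, fun k hk => h.2.2.1 k (by omega), fun k hk => h.2.2.2 k (by omega)⟩

/-- A two-step path can be prolonged by one admissible step; its weight grows by the value at the
new endpoint. -/
lemma IsWedgePath2.snoc (c : ℤ × ℤ → ℝ) {u v : ℤ × ℤ} {len : ℕ} {π : ℕ → ℤ × ℤ}
    (h : IsWedgePath2 u len π) (hv : v ∈ WedgeL) (hs : v - u = (1, 0) ∨ v - u = (-1, 1)) :
    ∃ π', IsWedgePath2 v (len + 1) π' ∧
      ∑ k ∈ Finset.range (len + 1 + 1), c (π' k) =
        ∑ k ∈ Finset.range (len + 1), c (π k) + c v := by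
  obtain ⟨h0, hu, hmem, hstep⟩ := h
  refine ⟨fun k => if k ≤ len then π k else v, ⟨by simpa using h0, by simp, ?_, ?_⟩, ?_⟩
  · intro k _
    dsimp only
    split_ifs with hk
    · exact hmem k hk
    · exact hv
  · intro k hk
    dsimp only
    rcases Nat.lt_succ_iff_lt_or_eq.mp hk with hk | rfl
    · rw [if_pos (by omega), if_pos (by omega)]
      exact hstep k hk
    · rw [if_neg (by omega), if_pos le_rfl, hu]
      exact hs
  · rw [Finset.sum_range_succ]
    congr 1
    · refine Finset.sum_congr rfl fun k hk => ?_
      dsimp only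
      rw [if_pos (by have := Finset.mem_range.mp hk; omega)]
    · simp

/-- Every three-step path is dominated in weight by a two-step path to the same point. -/
lemma IsWedgePath.exists_two_step_ge (c : ℤ × ℤ → ℝ) (hc : ∀ v, 0 ≤ c v) (len : ℕ) :
    ∀ (u : ℤ × ℤ) (π : ℕ → ℤ × ℤ), IsWedgePath u len π →
      ∃ (len' : ℕ) (π' : ℕ → ℤ × ℤ), IsWedgePath2 u len' π' ∧
        ∑ k ∈ Finset.range (len + 1), c (π k) ≤ ∑ k ∈ Finset.range (len' + 1), c (π' k) := by
  induction len with
  | zero =>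
    intro u π h
    exact ⟨0, π, ⟨h.1, h.2.1, h.2.2.1, fun k hk => absurd hk (Nat.not_lt_zero k)⟩, le_rfl⟩
  | succ n ih =>
    intro u π h
    obtain ⟨m, ρ, hρ, hle⟩ := ih _ π h.init
    have hmem : π n ∈ WedgeL := h.2.2.1 n (by omega)
    have hu : u ∈ WedgeL := h.2.1 ▸ h.2.2.1 (n + 1) le_rfl
    have hs := h.2.2.2 n (by omega)
    rw [Finset.sum_range_succ, h.2.1]
    rw [h.2.1] at hs
    -- Steps `(1,0)` and `(-1,1)` are copied; only the vertical step needs to be replaced.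
    have direct : (u - π n = (1, 0) ∨ u - π n = (-1, 1)) →
        ∃ (len' : ℕ) (π' : ℕ → ℤ × ℤ), IsWedgePath2 u len' π' ∧
          ∑ k ∈ Finset.range (n + 1), c (π k) + c u ≤
            ∑ k ∈ Finset.range (len' + 1), c (π' k) := by
      intro hs
      obtain ⟨ρ', hρ', hsum⟩ := hρ.snoc c hu hs
      exact ⟨m + 1, ρ', hρ', by linarith⟩
    rcases hs with hs | hs | hs
    · exact direct (Or.inl hs)
    · -- The vertical step is routed through the point to the right of `π n`.
      have hw : π n + (1, 0) ∈ WedgeL := by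
        obtain ⟨h1, h2⟩ := hmem
        constructor
        · simpa using h1
        · simp only [Prod.fst_add, Prod.snd_add]
          omega
      obtain ⟨ρ₁, hρ₁, hsum₁⟩ := hρ.snoc c hw (Or.inl (by simp))
      have hlast : u - (π n + (1, 0)) = (-1, 1) := by
        rw [← sub_sub, hs]
        rfl
      obtain ⟨ρ₂, hρ₂, hsum₂⟩ := hρ₁.snoc c hu (Or.inr hlast)
      exact ⟨m + 1 + 1, ρ₂, hρ₂, by linarith [hc (π n + (1, 0))]⟩
    · exact direct (Or.inr hs)

/-- for nonnegative weights, the maximal path weight over paths with steps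
`(1,0)`, `(0,1)`, `(−1,1)` equals the maximal path weight over the smaller class of
paths with steps `(1,0)` and `(−1,1)` only. -/
theorem wedge_paths_two_steps_suffice
    (cvals : ℤ × ℤ → ℝ) (hc : ∀ v, 0 ≤ cvals v) (u : ℤ × ℤ) (hu : u ∈ WedgeL) :
    sSup { S | ∃ (len : ℕ) (π : ℕ → ℤ × ℤ), IsWedgePath u len π ∧
        S = ∑ k ∈ Finset.range (len + 1), cvals (π k) } =
      sSup { S | ∃ (len : ℕ) (π : ℕ → ℤ × ℤ), IsWedgePath2 u len π ∧
        S = ∑ k ∈ Finset.range (len + 1), cvals (π k) } := by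
  refine csSup_eq_csSup_of_forall_exists_le ?_ ?_
  · rintro _ ⟨len, π, hπ, rfl⟩
    obtain ⟨len', π', hπ', hle⟩ := IsWedgePath.exists_two_step_ge cvals hc len u π hπ
    exact ⟨_, ⟨len', π', hπ', rfl⟩, hle⟩
  · rintro _ ⟨len, π, hπ, rfl⟩
    exact ⟨_, ⟨len, π, hπ.isWedgePath, rfl⟩, le_rfl⟩
end

section
/- In the variational problem defining Γ^q it suffices to consider straight-line paths and three-segment paths that spend an interval of time on the vertical line x₁ = q: for every q ∈ ℝ and every (x,y) in the interior of 𝒱, Γ^q(x,y) equals the maximum of γ_0(x,y) and the supremum, over all 0 ≤ a ≤ b such that (q,a) ∈ 𝒱, (0,b−a) ∈ 𝒱 and (x−q, y−b) ∈ 𝒱, of γ_0(q,a) + c^{-1} γ_0(0, b−a) + γ_0(x−q, y−b). -/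
/-!
Upper bound. The shape function is an infimum of linear functionals,
`γ₀(x,y) = inf_{θ>0} (1+θ)(x+y) + (1+θ⁻¹)y` (`gamma0_le_linear`, `le_gamma0_of_forall`), so
integrating along a path gives Jensen's inequality `∫ γ₀(f') ≤ γ₀(f t - f s)` on every time
interval (`integral_le_gamma0`). If a path misses the line `x₁ = q`, its value is therefore at most
`γ₀(x,y)`. Otherwise split it at the first and last times on the line, at heights `a` and `b`:
the rate is `1` before and after, and in between it is at least `c`, so Jensen bounds the three
parts by `γ₀(q,a)`, `c⁻¹ γ₀(0,b-a)` and `γ₀(x-q,y-b)` (`path_value_le`).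

Lower bound. Straight and three-segment polygonal paths are admissible, and since `λ ≤ 1` their
values are at least the corresponding expressions (`straight_value`, `threeSeg_value`).
-/

open Filter Set

/-- The continuum wedge `𝒱 = {(x,y) ∈ ℝ² : y ≥ 0, x ≥ −y}`. -/
def WedgeV : Set (ℝ × ℝ) := { p | 0 ≤ p.2 ∧ -p.2 ≤ p.1 }

/-- The homogeneous shape function `γ₀(x,y) = (√(x+y) + √y)²`. -/
noncomputable def gamma0 (p : ℝ × ℝ) : ℝ := (Real.sqrt (p.1 + p.2) + Real.sqrt p.2) ^ 2

/-- `f : [a,b] → ℝ²` is piecewise `C¹`: continuous on `[a,b]` and `C¹` on each cell of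
some finite partition `a = p 0 < p 1 < ⋯ < p k = b`. -/
def PiecewiseC1PathOn (f : ℝ → ℝ × ℝ) (a b : ℝ) : Prop :=
  ContinuousOn f (Set.Icc a b) ∧
    ∃ (k : ℕ) (p : ℕ → ℝ), p 0 = a ∧ p k = b ∧ (∀ i < k, p i < p (i + 1)) ∧
      ∀ i < k, ContDiffOn ℝ 1 f (Set.Icc (p i) (p (i + 1)))

/-- The macroscopic passage-time functional
`Γ^q(x,y) = sup ∫₀¹ γ₀(𝐱′(s))/λ(x₁(s) − q) ds` over piecewise `C¹` paths
`𝐱 : [0,1] → 𝒱` with `𝐱(0) = (0,0)`, `𝐱(1) = (x,y)` and `𝐱′(s) ∈ 𝒱`. -/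
noncomputable def GammaQ (c q x y : ℝ) : ℝ :=
  sSup { a | ∃ f : ℝ → ℝ × ℝ, PiecewiseC1PathOn f 0 1 ∧ f 0 = (0, 0) ∧ f 1 = (x, y) ∧
    (∀ s ∈ Set.Icc (0 : ℝ) 1, f s ∈ WedgeV) ∧
    (∀ s ∈ Set.Icc (0 : ℝ) 1, deriv f s ∈ WedgeV) ∧
    a = ∫ s in (0 : ℝ)..1, gamma0 (deriv f s) / lam c ((f s).1 - q) }

/-! ### The shape function and the wedge -/

/-- One half of the variational formula
`γ₀(x,y) = inf_{θ>0} (1+θ)(x+y) + (1+θ⁻¹)y`, by completing the square. -/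
theorem gamma0_le_linear {p : ℝ × ℝ} (hp : p ∈ WedgeV) {θ : ℝ} (hθ : 0 < θ) :
    gamma0 p ≤ (1 + θ) * (p.1 + p.2) + (1 + θ⁻¹) * p.2 := by
  obtain ⟨h2, h1⟩ := hp
  have hu : 0 ≤ p.1 + p.2 := by linarith
  unfold gamma0
  set u := Real.sqrt (p.1 + p.2) with hudef
  set v := Real.sqrt p.2 with hvdef
  have e1 : p.1 + p.2 = u ^ 2 := (Real.sq_sqrt hu).symm
  have e2 : p.2 = v ^ 2 := (Real.sq_sqrt h2).symm
  rw [e1, e2]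
  have key : (1 + θ) * u ^ 2 + (1 + θ⁻¹) * v ^ 2 - (u + v) ^ 2 = θ⁻¹ * (θ * u - v) ^ 2 := by
    field_simp
    ring
  have : 0 ≤ θ⁻¹ * (θ * u - v) ^ 2 := by positivity
  linarith

/-- The other half of the variational formula for `γ₀`. -/
theorem le_gamma0_of_forall {p : ℝ × ℝ} (hp : p ∈ WedgeV) {I : ℝ}
    (h : ∀ θ : ℝ, 0 < θ → I ≤ (1 + θ) * (p.1 + p.2) + (1 + θ⁻¹) * p.2) :
    I ≤ gamma0 p := by
  obtain ⟨h2, h1⟩ := hp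
  have hu : 0 ≤ p.1 + p.2 := by linarith
  unfold gamma0
  have hu0 : 0 ≤ Real.sqrt (p.1 + p.2) := Real.sqrt_nonneg _
  have hv0 : 0 ≤ Real.sqrt p.2 := Real.sqrt_nonneg _
  have e1 : p.1 + p.2 = Real.sqrt (p.1 + p.2) ^ 2 := (Real.sq_sqrt hu).symm
  have e2 : p.2 = Real.sqrt p.2 ^ 2 := (Real.sq_sqrt h2).symm
  set u := Real.sqrt (p.1 + p.2)
  set v := Real.sqrt p.2
  rw [e1, e2] at h
  -- The optimal `θ = v / u` degenerates when `u` or `v` vanishes, so both are shifted by `ε`.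
  have hε : ∀ ε : ℝ, 0 < ε → I ≤ (u + v) ^ 2 + ε * (u + v) := by
    intro ε hε
    have h' := h ((v + ε) / (u + ε)) (by positivity)
    have b1 : (v + ε) / (u + ε) * u ^ 2 ≤ (v + ε) * u := by
      rw [div_mul_eq_mul_div, div_le_iff₀ (by positivity)]
      have : 0 ≤ (v + ε) * u * ε := by positivity
      nlinarith
    have b2 : ((v + ε) / (u + ε))⁻¹ * v ^ 2 ≤ (u + ε) * v := by
      rw [inv_div, div_mul_eq_mul_div, div_le_iff₀ (by positivity)]
      have : 0 ≤ (u + ε) * v * ε := by positivity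
      nlinarith
    nlinarith
  refine le_of_forall_pos_le_add fun δ hδ => ?_
  have h3 := hε (δ / (u + v + 1)) (by positivity)
  have h4 : δ / (u + v + 1) * (u + v) ≤ δ := by
    rw [div_mul_eq_mul_div, div_le_iff₀ (by positivity)]
    nlinarith
  linarith

theorem gamma0_nonneg (p : ℝ × ℝ) : 0 ≤ gamma0 p := sq_nonneg _

theorem gamma0_smul (r : ℝ) (hr : 0 ≤ r) (p : ℝ × ℝ) : gamma0 (r • p) = r * gamma0 p := by
  unfold gamma0
  simp only [Prod.smul_fst, Prod.smul_snd, smul_eq_mul, ← mul_add]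
  rw [Real.sqrt_mul hr, Real.sqrt_mul hr, ← mul_add, mul_pow, Real.sq_sqrt hr]

theorem lam_pos {c : ℝ} (hc : c ∈ Ioc (0 : ℝ) 1) (z : ℝ) : 0 < lam c z := by
  unfold lam; split_ifs <;> [exact hc.1; exact one_pos]

theorem lam_le_one {c : ℝ} (hc : c ∈ Ioc (0 : ℝ) 1) (z : ℝ) : lam c z ≤ 1 := by
  unfold lam; split_ifs <;> [exact hc.2; exact le_rfl]

theorem le_lam {c : ℝ} (hc : c ∈ Ioc (0 : ℝ) 1) (z : ℝ) : c ≤ lam c z := by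
  unfold lam; split_ifs <;> [exact le_rfl; exact hc.2]

/-! ### The fundamental theorem of calculus for piecewise smooth functions -/

theorem partition_mono {p : ℕ → ℝ} {k : ℕ} (hp : ∀ i < k, p i < p (i + 1)) :
    ∀ {i j : ℕ}, i ≤ j → j ≤ k → p i ≤ p j := by
  intro i j hij
  induction j, hij using Nat.le_induction with
  | base => intro _; exact le_rfl
  | succ j _ ih => intro hj; exact (ih (by omega)).trans (hp j (by omega)).le

theorem exists_cell {p : ℕ → ℝ} {s : ℝ} (hs : s ∉ range p) :
    ∀ {k : ℕ}, p 0 < s → s < p k → ∃ i < k, s ∈ Ioo (p i) (p (i + 1)) := by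
  intro k h0
  induction k with
  | zero => intro h; exact absurd h0 h.le.not_gt
  | succ k ih =>
    intro h
    rcases lt_or_ge s (p k) with h1 | h1
    · obtain ⟨i, hi, h⟩ := ih h1
      exact ⟨i, by omega, h⟩
    · exact ⟨k, by omega, lt_of_le_of_ne h1 fun h => hs ⟨k, h⟩, h⟩

/-- A function with nonnegative derivative off a finite partition has integrable derivative and
satisfies the fundamental theorem of calculus. -/
theorem ftc_partition {h h' : ℝ → ℝ} (hc : ContinuousOn h (Icc 0 1)) {k : ℕ} {p : ℕ → ℝ}
    (p0 : p 0 = 0) (pk : p k = 1) (hp : ∀ i < k, p i < p (i + 1))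
    (hd : ∀ i < k, ∀ s ∈ Ioo (p i) (p (i + 1)), HasDerivAt h (h' s) s)
    (hn : ∀ s ∈ Icc (0 : ℝ) 1, 0 ≤ h' s) :
    IntervalIntegrable h' MeasureTheory.volume 0 1 ∧
      ∀ s t : ℝ, 0 ≤ s → s ≤ t → t ≤ 1 → ∫ τ in s..t, h' τ = h t - h s := by
  have hint : IntervalIntegrable h' MeasureTheory.volume 0 1 := by
    rw [← p0, ← pk]
    refine IntervalIntegrable.trans_iterate fun i hi => ?_
    have hlt := hp i hi
    have hsub : Icc (p i) (p (i + 1)) ⊆ Icc 0 1 := by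
      apply Icc_subset_Icc
      · rw [← p0]; exact partition_mono hp (by omega) (by omega)
      · rw [← pk]; exact partition_mono hp (by omega) (by omega)
    apply intervalIntegral.intervalIntegrable_deriv_of_nonneg (g := h)
    · rw [uIcc_of_le hlt.le]; exact hc.mono hsub
    · rw [min_eq_left hlt.le, max_eq_right hlt.le]; exact hd i hi
    · rw [min_eq_left hlt.le, max_eq_right hlt.le]
      exact fun s hs => hn s (hsub (Ioo_subset_Icc_self hs))
  refine ⟨hint, fun s t h0 hst h1 => ?_⟩
  refine MeasureTheory.integral_eq_of_hasDerivAt_off_countable_of_le h h' hst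
    (countable_range p) (hc.mono (Icc_subset_Icc h0 h1)) ?_ ?_
  · rintro τ ⟨hτ, hτp⟩
    obtain ⟨i, hi, hτi⟩ := exists_cell (k := k) hτp (by rw [p0]; linarith [hτ.1])
      (by rw [pk]; linarith [hτ.2])
    exact hd i hi τ hτi
  · refine hint.mono_set ?_
    rw [uIcc_of_le hst, uIcc_of_le zero_le_one]
    exact Icc_subset_Icc h0 h1

theorem hasDerivAt_coord {f : ℝ → ℝ × ℝ} {v : ℝ × ℝ} {s : ℝ} (h : HasDerivAt f v s) :
    HasDerivAt (fun s => (f s).2) v.2 s ∧ HasDerivAt (fun s => (f s).1 + (f s).2) (v.1 + v.2) s := by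
  have h1 : HasDerivAt (fun s => (f s).1) v.1 s := by
    simpa using h.hasFDerivAt.fst.hasDerivAt
  have h2 : HasDerivAt (fun s => (f s).2) v.2 s := by
    simpa using h.hasFDerivAt.snd.hasDerivAt
  exact ⟨h2, h1.add h2⟩

/-- The fundamental theorem of calculus for the two nonnegative linear coordinates `x + y` and `y`
of a piecewise `C¹` path with velocity in the wedge. -/
theorem path_ftc {f : ℝ → ℝ × ℝ} (hf : PiecewiseC1PathOn f 0 1)
    (hd : ∀ s ∈ Icc (0 : ℝ) 1, deriv f s ∈ WedgeV) :
    (IntervalIntegrable (fun s => (deriv f s).2) MeasureTheory.volume 0 1 ∧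
      ∀ s t : ℝ, 0 ≤ s → s ≤ t → t ≤ 1 →
        ∫ τ in s..t, (deriv f τ).2 = (f t).2 - (f s).2) ∧
    (IntervalIntegrable (fun s => (deriv f s).1 + (deriv f s).2) MeasureTheory.volume 0 1 ∧
      ∀ s t : ℝ, 0 ≤ s → s ≤ t → t ≤ 1 →
        ∫ τ in s..t, ((deriv f τ).1 + (deriv f τ).2) =
          ((f t).1 + (f t).2) - ((f s).1 + (f s).2)) := by
  obtain ⟨hc, k, p, p0, pk, hp, hC⟩ := hf
  have hder : ∀ i < k, ∀ s ∈ Ioo (p i) (p (i + 1)), HasDerivAt f (deriv f s) s := by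
    intro i hi s hs
    have := (hC i hi).differentiableOn (by norm_num)
    exact (this.differentiableAt (Icc_mem_nhds hs.1 hs.2)).hasDerivAt
  constructor
  · refine ftc_partition (h := fun s => (f s).2) hc.snd p0 pk hp ?_ fun s hs => (hd s hs).1
    exact fun i hi s hs => (hasDerivAt_coord (hder i hi s hs)).1
  · refine ftc_partition (h := fun s => (f s).1 + (f s).2) (hc.fst.add hc.snd) p0 pk hp ?_
      fun s hs => by linarith [(hd s hs).2]
    exact fun i hi s hs => (hasDerivAt_coord (hder i hi s hs)).2

theorem path_increment_mem {f : ℝ → ℝ × ℝ} (hf : PiecewiseC1PathOn f 0 1)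
    (hd : ∀ s ∈ Icc (0 : ℝ) 1, deriv f s ∈ WedgeV) {s t : ℝ} (h0 : 0 ≤ s) (hst : s ≤ t)
    (h1 : t ≤ 1) : f t - f s ∈ WedgeV := by
  obtain ⟨⟨-, e2⟩, -, e1⟩ := path_ftc hf hd
  have a2 : 0 ≤ ∫ τ in s..t, (deriv f τ).2 :=
    intervalIntegral.integral_nonneg hst fun τ hτ =>
      (hd τ ⟨h0.trans hτ.1, hτ.2.trans h1⟩).1
  have a1 : 0 ≤ ∫ τ in s..t, ((deriv f τ).1 + (deriv f τ).2) :=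
    intervalIntegral.integral_nonneg hst fun τ hτ => by
      linarith [(hd τ ⟨h0.trans hτ.1, hτ.2.trans h1⟩).2]
  rw [e2 s t h0 hst h1] at a2
  rw [e1 s t h0 hst h1] at a1
  constructor
  · simpa using a2
  · simp only [Prod.fst_sub, Prod.snd_sub]; linarith

/-! ### Upper bound -/

/-- Jensen's inequality for `γ₀` along a path, for an integrand `G` dominated by `K γ₀(f')`. -/
theorem integral_le_gamma0 {f : ℝ → ℝ × ℝ} (hf : PiecewiseC1PathOn f 0 1)
    (hd : ∀ s ∈ Icc (0 : ℝ) 1, deriv f s ∈ WedgeV) {s t : ℝ} (h0 : 0 ≤ s) (hst : s ≤ t)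
    (h1 : t ≤ 1) {G : ℝ → ℝ} (hG : IntervalIntegrable G MeasureTheory.volume s t) {K : ℝ}
    (hK : 0 < K) (hle : ∀ τ ∈ Ioo s t, G τ ≤ K * gamma0 (deriv f τ)) :
    ∫ τ in s..t, G τ ≤ K * gamma0 (f t - f s) := by
  rw [← inv_mul_le_iff₀ hK]
  refine le_gamma0_of_forall (path_increment_mem hf hd h0 hst h1) fun θ hθ => ?_
  obtain ⟨⟨i2, e2⟩, i1, e1⟩ := path_ftc hf hd
  have hsub : uIcc s t ⊆ uIcc 0 1 := by
    rw [uIcc_of_le hst, uIcc_of_le zero_le_one]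
    exact Icc_subset_Icc h0 h1
  have j2 := i2.mono_set hsub
  have j1 := i1.mono_set hsub
  have hI := intervalIntegral.integral_mono_on_of_le_Ioo hst hG
    (((j1.const_mul (1 + θ)).add (j2.const_mul (1 + θ⁻¹))).const_mul K) (fun τ hτ =>
      (hle τ hτ).trans (mul_le_mul_of_nonneg_left
        (gamma0_le_linear (hd τ ⟨h0.trans hτ.1.le, hτ.2.le.trans h1⟩) hθ) hK.le))
  rw [intervalIntegral.integral_const_mul, intervalIntegral.integral_add
    (j1.const_mul _) (j2.const_mul _), intervalIntegral.integral_const_mul,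
    intervalIntegral.integral_const_mul, e1 s t h0 hst h1, e2 s t h0 hst h1] at hI
  rw [inv_mul_le_iff₀ hK]
  refine hI.trans_eq ?_
  simp only [Prod.fst_sub, Prod.snd_sub]
  ring

/-- Every path value is bounded by the straight-line value or by some three-segment value, with
`a` and `b` the heights of the path at its first and last times on the line `x₁ = q`. -/
theorem path_value_le {c : ℝ} (hc : c ∈ Ioc (0 : ℝ) 1) {q x y : ℝ} {f : ℝ → ℝ × ℝ}
    (hf : PiecewiseC1PathOn f 0 1) (hf0 : f 0 = (0, 0)) (hf1 : f 1 = (x, y))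
    (hV : ∀ s ∈ Icc (0 : ℝ) 1, f s ∈ WedgeV)
    (hd : ∀ s ∈ Icc (0 : ℝ) 1, deriv f s ∈ WedgeV) :
    (∫ s in (0 : ℝ)..1, gamma0 (deriv f s) / lam c ((f s).1 - q)) ≤ gamma0 (x, y) ∨
    ∃ a b : ℝ, 0 ≤ a ∧ a ≤ b ∧
      ((q, a) : ℝ × ℝ) ∈ WedgeV ∧ ((0, b - a) : ℝ × ℝ) ∈ WedgeV ∧
      ((x - q, y - b) : ℝ × ℝ) ∈ WedgeV ∧
      (∫ s in (0 : ℝ)..1, gamma0 (deriv f s) / lam c ((f s).1 - q)) ≤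
        gamma0 (q, a) + c⁻¹ * gamma0 (0, b - a) + gamma0 (x - q, y - b) := by
  set G : ℝ → ℝ := fun s => gamma0 (deriv f s) / lam c ((f s).1 - q) with hGdef
  -- A non-integrable integrand has integral `0` by convention, so the bound is trivial.
  by_cases hG : IntervalIntegrable G MeasureTheory.volume 0 1
  swap
  · left
    rw [intervalIntegral.integral_undef hG]
    exact gamma0_nonneg _
  have hGsub : ∀ {s t : ℝ}, 0 ≤ s → s ≤ t → t ≤ 1 →
      IntervalIntegrable G MeasureTheory.volume s t := by
    intro s t h0 hst h1
    refine hG.mono_set ?_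
    rw [uIcc_of_le hst, uIcc_of_le zero_le_one]
    exact Icc_subset_Icc h0 h1
  have hoff : ∀ τ, (f τ).1 ≠ q → G τ ≤ 1 * gamma0 (deriv f τ) := by
    intro τ hτ
    have : lam c ((f τ).1 - q) = 1 := if_neg (sub_ne_zero.mpr hτ)
    simp [hGdef, this]
  have hgen : ∀ τ, G τ ≤ c⁻¹ * gamma0 (deriv f τ) := by
    intro τ
    rw [hGdef, inv_mul_eq_div]
    exact div_le_div_of_nonneg_left (gamma0_nonneg _) hc.1 (le_lam hc _)
  set Z : Set ℝ := Icc 0 1 ∩ (fun s => (f s).1) ⁻¹' {q} with hZ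
  have hZc : IsCompact Z := isCompact_Icc.of_isClosed_subset
    (hf.1.fst.preimage_isClosed_of_isClosed isClosed_Icc isClosed_singleton) inter_subset_left
  rcases Z.eq_empty_or_nonempty with hE | hne
  · left
    have := integral_le_gamma0 hf hd le_rfl zero_le_one le_rfl hG one_pos fun τ hτ =>
      hoff τ fun h => (hE ▸ (⟨Ioo_subset_Icc_self hτ, h⟩ : τ ∈ Z) : τ ∈ (∅ : Set ℝ))
    simpa [hf0, hf1] using this
  · right
    obtain ⟨s, hs, hsmin⟩ := hZc.exists_isLeast hne
    obtain ⟨t, ht, htmax⟩ := hZc.exists_isGreatest hne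
    obtain ⟨⟨s0, s1⟩, hsq⟩ := hs
    obtain ⟨⟨t0, t1⟩, htq⟩ := ht
    have hsq : (f s).1 = q := hsq
    have htq : (f t).1 = q := htq
    have hst : s ≤ t := hsmin ⟨⟨t0, t1⟩, htq⟩
    have m1 := hV s ⟨s0, s1⟩
    have m2 := path_increment_mem hf hd s0 hst t1
    have m3 := path_increment_mem hf hd t0 t1 le_rfl
    have I1 := integral_le_gamma0 hf hd le_rfl s0 s1 (hGsub le_rfl s0 s1) one_pos fun τ hτ =>
      hoff τ fun h => hτ.2.not_ge (hsmin ⟨⟨hτ.1.le, hτ.2.le.trans s1⟩, h⟩)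
    have I2 := integral_le_gamma0 hf hd s0 hst t1 (hGsub s0 hst t1) (inv_pos.mpr hc.1)
      fun τ _ => hgen τ
    have I3 := integral_le_gamma0 hf hd t0 t1 le_rfl (hGsub t0 t1 le_rfl) one_pos fun τ hτ =>
      hoff τ fun h => hτ.1.not_ge (htmax ⟨⟨t0.trans hτ.1.le, hτ.2.le⟩, h⟩)
    have hadd : ∫ τ in (0 : ℝ)..1, G τ =
        (∫ τ in (0 : ℝ)..s, G τ) + (∫ τ in s..t, G τ) + ∫ τ in t..1, G τ := by
      rw [intervalIntegral.integral_add_adjacent_intervals (hGsub le_rfl s0 s1) (hGsub s0 hst t1),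
        intervalIntegral.integral_add_adjacent_intervals (hGsub le_rfl t0 t1) (hGsub t0 t1 le_rfl)]
    have d1 : f s = (q, (f s).2) := Prod.ext hsq rfl
    have d0 : f s - f 0 = (q, (f s).2) := by rw [hf0]; ext <;> simp [hsq]
    have d2 : f t - f s = (0, (f t).2 - (f s).2) := by ext <;> simp [hsq, htq]
    have d3 : f 1 - f t = (x - q, y - (f t).2) := by rw [hf1]; ext <;> simp [htq]
    rw [d0] at I1
    rw [d2] at I2 m2
    rw [d3] at I3 m3
    refine ⟨(f s).2, (f t).2, m1.1, sub_nonneg.mp m2.1, d1 ▸ m1, m2, m3, ?_⟩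
    rw [hadd]
    linarith

/-! ### Lower bound -/

/-- On a time interval where the path is affine with velocity `B` and the rate is constantly `K`,
the integrand is the constant `γ₀(B)/K`. -/
theorem affine_piece {c q : ℝ} {f : ℝ → ℝ × ℝ} {u v K : ℝ} (huv : u ≤ v) {A B : ℝ × ℝ}
    (hf : ∀ s ∈ Ioo u v, f s = A + s • B)
    (hK : ∀ s ∈ Ioo u v, lam c ((f s).1 - q) = K) :
    IntervalIntegrable (fun s => gamma0 (deriv f s) / lam c ((f s).1 - q))
      MeasureTheory.volume u v ∧
    ∫ s in u..v, gamma0 (deriv f s) / lam c ((f s).1 - q) = (v - u) * (gamma0 B / K) := by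
  have key : EqOn (fun _ => gamma0 B / K)
      (fun s => gamma0 (deriv f s) / lam c ((f s).1 - q)) (Ioo u v) := by
    intro s hs
    have hev : f =ᶠ[nhds s] fun s => A + s • B :=
      Filter.eventually_of_mem (Ioo_mem_nhds hs.1 hs.2) hf
    have hder : HasDerivAt (fun s : ℝ => A + s • B) B s := by
      simpa using ((hasDerivAt_id s).smul_const B).const_add A
    simp only [hK s hs, hev.deriv_eq, hder.deriv]
  constructor
  · have key' := key
    rw [← uIoo_of_le huv] at key'
    exact IntervalIntegrable.congr_uIoo intervalIntegrable_const key'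
  · rw [← intervalIntegral.integral_congr_Ioo_of_le huv key, intervalIntegral.integral_const,
      smul_eq_mul]

/-- A path along which `y` and `x + y` are nondecreasing has velocity in the wedge; where it is
not differentiable, the velocity is `0` by convention. -/
theorem deriv_mem_of_monotone {f : ℝ → ℝ × ℝ} (h2 : Monotone fun s => (f s).2)
    (h1 : Monotone fun s => (f s).1 + (f s).2) (s : ℝ) : deriv f s ∈ WedgeV := by
  by_cases hd : DifferentiableAt ℝ f s
  · have e := hd.hasDerivAt
    have a2 := h2.deriv_nonneg (x := s)
    have a1 := h1.deriv_nonneg (x := s)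
    rw [(hasDerivAt_coord e).1.deriv] at a2
    rw [(hasDerivAt_coord e).2.deriv] at a1
    exact ⟨a2, by linarith⟩
  · rw [deriv_zero_of_not_differentiableAt hd]
    simp [WedgeV]

/-- The values attained by admissible paths; `GammaQ c q x y` is the supremum of this set. -/
def pathValues (c q x y : ℝ) : Set ℝ :=
  { a | ∃ f : ℝ → ℝ × ℝ, PiecewiseC1PathOn f 0 1 ∧ f 0 = (0, 0) ∧ f 1 = (x, y) ∧
    (∀ s ∈ Set.Icc (0 : ℝ) 1, f s ∈ WedgeV) ∧
    (∀ s ∈ Set.Icc (0 : ℝ) 1, deriv f s ∈ WedgeV) ∧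
    a = ∫ s in (0 : ℝ)..1, gamma0 (deriv f s) / lam c ((f s).1 - q) }

/-- The truncation of `t` to `[0,1]`. -/
noncomputable def clamp (t : ℝ) : ℝ := max 0 (min 1 t)

theorem clamp_mono : Monotone clamp := fun _ _ h => max_le_max le_rfl (min_le_min le_rfl h)
theorem clamp_nonneg (t : ℝ) : 0 ≤ clamp t := le_max_left _ _
theorem clamp_of_le {t : ℝ} (h : t ≤ 0) : clamp t = 0 :=
  max_eq_left ((min_le_right _ _).trans h)
theorem clamp_of_ge {t : ℝ} (h : 1 ≤ t) : clamp t = 1 := by simp [clamp, min_eq_left h]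
theorem clamp_of_mem {t : ℝ} (h0 : 0 ≤ t) (h1 : t ≤ 1) : clamp t = t := by
  simp [clamp, min_eq_right h1, h0]

/-- The polygonal path from the origin with successive increments `P`, `Q`, `R`, each traversed
at constant speed in time `1/3`. -/
noncomputable def threeSeg (P Q R : ℝ × ℝ) (s : ℝ) : ℝ × ℝ :=
  clamp (3 * s) • P + clamp (3 * s - 1) • Q + clamp (3 * s - 2) • R

section
variable (P Q R : ℝ × ℝ)

theorem threeSeg_first {s : ℝ} (hs : s ∈ Icc (0 : ℝ) (1 / 3)) :
    threeSeg P Q R s = 0 + s • ((3 : ℝ) • P) := by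
  obtain ⟨h0, h1⟩ := hs
  rw [threeSeg, clamp_of_mem (by linarith) (by linarith), clamp_of_le (by linarith),
    clamp_of_le (by linarith)]
  module

theorem threeSeg_second {s : ℝ} (hs : s ∈ Icc (1 / 3 : ℝ) (2 / 3)) :
    threeSeg P Q R s = (P - Q) + s • ((3 : ℝ) • Q) := by
  obtain ⟨h0, h1⟩ := hs
  rw [threeSeg, clamp_of_ge (by linarith), clamp_of_mem (by linarith) (by linarith),
    clamp_of_le (by linarith)]
  module

theorem threeSeg_third {s : ℝ} (hs : s ∈ Icc (2 / 3 : ℝ) 1) :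
    threeSeg P Q R s = (P + Q - (2 : ℝ) • R) + s • ((3 : ℝ) • R) := by
  obtain ⟨h0, h1⟩ := hs
  rw [threeSeg, clamp_of_ge (by linarith), clamp_of_ge (by linarith),
    clamp_of_mem (by linarith) (by linarith)]
  module

theorem threeSeg_piecewiseC1 : PiecewiseC1PathOn (threeSeg P Q R) 0 1 := by
  constructor
  · unfold threeSeg clamp
    fun_prop
  · refine ⟨3, fun i => (i : ℝ) / 3, by norm_num, by norm_num,
      fun i _ => by push_cast; linarith, fun i hi => ?_⟩
    have haff : ∀ A B : ℝ × ℝ, ContDiff ℝ 1 fun s : ℝ => A + s • B := fun A B => by fun_prop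
    interval_cases i
    · refine (haff 0 ((3 : ℝ) • P)).contDiffOn.congr fun s hs => threeSeg_first P Q R ?_
      norm_num at hs ⊢; exact hs
    · refine (haff (P - Q) ((3 : ℝ) • Q)).contDiffOn.congr fun s hs => threeSeg_second P Q R ?_
      norm_num at hs ⊢; exact hs
    · refine (haff (P + Q - (2 : ℝ) • R) ((3 : ℝ) • R)).contDiffOn.congr
        fun s hs => threeSeg_third P Q R ?_
      norm_num at hs ⊢; exact hs

variable {P Q R}

theorem threeSeg_mem (hP : P ∈ WedgeV) (hQ : Q ∈ WedgeV) (hR : R ∈ WedgeV) (s : ℝ) :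
    threeSeg P Q R s ∈ WedgeV := by
  obtain ⟨p2, p1⟩ := hP
  obtain ⟨q2, q1⟩ := hQ
  obtain ⟨r2, r1⟩ := hR
  have a := clamp_nonneg (3 * s)
  have b := clamp_nonneg (3 * s - 1)
  have d := clamp_nonneg (3 * s - 2)
  constructor
  · simp only [threeSeg, Prod.snd_add, Prod.smul_snd, smul_eq_mul]
    positivity
  · simp only [threeSeg, Prod.snd_add, Prod.smul_snd, Prod.fst_add, Prod.smul_fst, smul_eq_mul]
    nlinarith [mul_nonneg a (neg_le_iff_add_nonneg.mp p1),
      mul_nonneg b (neg_le_iff_add_nonneg.mp q1), mul_nonneg d (neg_le_iff_add_nonneg.mp r1)]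

theorem threeSeg_deriv_mem (hP : P ∈ WedgeV) (hQ : Q ∈ WedgeV) (hR : R ∈ WedgeV) (s : ℝ) :
    deriv (threeSeg P Q R) s ∈ WedgeV := by
  have key : ∀ α β δ : ℝ, 0 ≤ α → 0 ≤ β → 0 ≤ δ →
      Monotone fun s : ℝ => clamp (3 * s) * α + clamp (3 * s - 1) * β + clamp (3 * s - 2) * δ := by
    intro α β δ hα hβ hδ s t hst
    have m1 : clamp (3 * s) ≤ clamp (3 * t) := clamp_mono (by linarith)
    have m2 : clamp (3 * s - 1) ≤ clamp (3 * t - 1) := clamp_mono (by linarith)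
    have m3 : clamp (3 * s - 2) ≤ clamp (3 * t - 2) := clamp_mono (by linarith)
    dsimp only
    gcongr
  refine deriv_mem_of_monotone (key P.2 Q.2 R.2 hP.1 hQ.1 hR.1) ?_ s
  have := key (P.1 + P.2) (Q.1 + Q.2) (R.1 + R.2) (by linarith [hP.2]) (by linarith [hQ.2])
    (by linarith [hR.2])
  convert this using 2
  simp only [threeSeg, Prod.snd_add, Prod.smul_snd, Prod.fst_add, Prod.smul_fst, smul_eq_mul]
  ring

end

/-- Every three-segment value is dominated by the value of the corresponding polygonal path. -/
theorem threeSeg_value {c : ℝ} (hc : c ∈ Ioc (0 : ℝ) 1) {q x y a b : ℝ}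
    (h1 : ((q, a) : ℝ × ℝ) ∈ WedgeV) (h2 : ((0, b - a) : ℝ × ℝ) ∈ WedgeV)
    (h3 : ((x - q, y - b) : ℝ × ℝ) ∈ WedgeV) :
    ∃ v ∈ pathValues c q x y,
      gamma0 (q, a) + c⁻¹ * gamma0 (0, b - a) + gamma0 (x - q, y - b) ≤ v := by
  set f := threeSeg (q, a) (0, b - a) (x - q, y - b) with hf
  refine ⟨_, ⟨f, threeSeg_piecewiseC1 _ _ _, ?_, ?_, fun s _ => threeSeg_mem h1 h2 h3 s,
    fun s _ => threeSeg_deriv_mem h1 h2 h3 s, rfl⟩, ?_⟩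
  · rw [hf, threeSeg_first _ _ _ (by norm_num)]
    ext <;> simp
  · rw [hf, threeSeg_third _ _ _ (by norm_num)]
    ext <;> simp <;> ring
  -- Unless contained in the line `x₁ = q`, the outer segments meet it only at an endpoint, so the
  -- rate is constant on each of the three open time intervals.
  obtain ⟨i1, e1⟩ := affine_piece (c := c) (q := q) (f := f) (K := lam c q)
    (by norm_num : (0 : ℝ) ≤ 1 / 3)
    (fun s hs => threeSeg_first _ _ _ (Ioo_subset_Icc_self hs)) (by
      intro s hs
      rw [hf, threeSeg_first _ _ _ (Ioo_subset_Icc_self hs)]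
      have e : (0 + s • (3 : ℝ) • (q, a) : ℝ × ℝ).1 - q = (3 * s - 1) * q := by simp; ring
      have : 3 * s - 1 ≠ 0 := by linarith [hs.2] |> ne_of_lt
      rw [e]
      simp [lam, this])
  obtain ⟨i2, e2⟩ := affine_piece (c := c) (q := q) (f := f) (K := c)
    (by norm_num : (1 / 3 : ℝ) ≤ 2 / 3)
    (fun s hs => threeSeg_second _ _ _ (Ioo_subset_Icc_self hs)) (by
      intro s hs
      rw [hf, threeSeg_second _ _ _ (Ioo_subset_Icc_self hs)]
      simp [lam])
  obtain ⟨i3, e3⟩ := affine_piece (c := c) (q := q) (f := f) (K := lam c (x - q))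
    (by norm_num : (2 / 3 : ℝ) ≤ 1)
    (fun s hs => threeSeg_third _ _ _ (Ioo_subset_Icc_self hs)) (by
      intro s hs
      rw [hf, threeSeg_third _ _ _ (Ioo_subset_Icc_self hs)]
      have e : ((q, a) + (0, b - a) - (2 : ℝ) • (x - q, y - b) + s • (3 : ℝ) • (x - q, y - b) :
          ℝ × ℝ).1 - q = (3 * s - 2) * (x - q) := by simp; ring
      have : 3 * s - 2 ≠ 0 := by linarith [hs.1] |> ne_of_gt
      rw [e]
      simp [lam, this])
  rw [← intervalIntegral.integral_add_adjacent_intervals (i1.trans i2) i3,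
    ← intervalIntegral.integral_add_adjacent_intervals i1 i2, e1, e2, e3,
    gamma0_smul 3 (by norm_num), gamma0_smul 3 (by norm_num), gamma0_smul 3 (by norm_num)]
  have l1 : gamma0 (q, a) ≤ gamma0 (q, a) / lam c q :=
    le_div_self (gamma0_nonneg _) (lam_pos hc _) (lam_le_one hc _)
  have l3 : gamma0 (x - q, y - b) ≤ gamma0 (x - q, y - b) / lam c (x - q) :=
    le_div_self (gamma0_nonneg _) (lam_pos hc _) (lam_le_one hc _)
  have r : (1 / 3 - 0) * (3 * gamma0 (q, a) / lam c q) +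
      (2 / 3 - 1 / 3) * (3 * gamma0 (0, b - a) / c) +
      (1 - 2 / 3) * (3 * gamma0 (x - q, y - b) / lam c (x - q)) =
      gamma0 (q, a) / lam c q + c⁻¹ * gamma0 (0, b - a) +
      gamma0 (x - q, y - b) / lam c (x - q) := by ring
  rw [r]
  linarith

/-- The value `γ₀(x,y)` is reached: if the open segment meets the line `x₁ = q` at time `r`, by the
three-segment value with `a = b = r y`, and otherwise by the straight path, on which the rate
is `1`. -/
theorem straight_value {c : ℝ} (hc : c ∈ Ioc (0 : ℝ) 1) {q x y : ℝ}
    (h : ((x, y) : ℝ × ℝ) ∈ WedgeV) :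
    ∃ v ∈ pathValues c q x y, gamma0 (x, y) ≤ v := by
  have hsm : ∀ r : ℝ, 0 ≤ r → r • ((x, y) : ℝ × ℝ) ∈ WedgeV := by
    intro r hr
    refine ⟨mul_nonneg hr h.1, ?_⟩
    have := mul_le_mul_of_nonneg_left h.2 hr
    simp only [Prod.smul_mk, smul_eq_mul] at this ⊢
    linarith
  by_cases hx : ∃ r ∈ Ioo (0 : ℝ) 1, r * x = q
  · obtain ⟨r, ⟨r0, r1⟩, rfl⟩ := hx
    have e1 : ((r * x, r * y) : ℝ × ℝ) = r • ((x, y) : ℝ × ℝ) := rfl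
    have e3 : ((x - r * x, y - r * y) : ℝ × ℝ) = (1 - r) • ((x, y) : ℝ × ℝ) := by
      ext <;> simp <;> ring
    obtain ⟨v, hv, hle⟩ := threeSeg_value hc (q := r * x) (x := x) (y := y) (a := r * y)
      (b := r * y) (e1 ▸ hsm r r0.le) (by simp [WedgeV]) (e3 ▸ hsm (1 - r) (by linarith))
    refine ⟨v, hv, le_trans (le_of_eq ?_) hle⟩
    rw [e1, e3, gamma0_smul r r0.le, gamma0_smul (1 - r) (by linarith)]
    simp [gamma0]
    ring
  · push Not at hx
    have hder : ∀ s : ℝ, deriv (fun s : ℝ => s • ((x, y) : ℝ × ℝ)) s = (x, y) := fun s => by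
      simpa using ((hasDerivAt_id s).smul_const ((x, y) : ℝ × ℝ)).deriv
    refine ⟨_, ⟨fun s => s • (x, y), ⟨by fun_prop, 1, fun i => (i : ℝ), by simp, by simp,
      fun i _ => by simp, fun i _ => by fun_prop⟩, by ext <;> simp, by simp, fun s hs => hsm s hs.1,
      fun s _ => by rw [hder]; exact h, rfl⟩, ?_⟩
    rw [(affine_piece (A := 0) (B := (x, y)) (K := 1) zero_le_one
      (fun s _ => (zero_add _).symm)
      (fun s hs => if_neg (sub_ne_zero.mpr (hx s hs)))).2]
    simp

/-- in the variational problem defining `Γ^q` it suffices to consider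
straight-line paths and three-segment paths spending time on the vertical line `x₁ = q`:
`Γ^q(x,y)` equals the maximum of `γ₀(x,y)` and the supremum over admissible `0 ≤ a ≤ b`
of `γ₀(q,a) + c⁻¹ γ₀(0,b−a) + γ₀(x−q,y−b)`. -/
theorem GammaQ_reduction
    (c : ℝ) (hc : c ∈ Set.Ioc (0 : ℝ) 1)
    (q x y : ℝ) (hy : 0 < y) (hxy : -y < x) :
    GammaQ c q x y =
      max (gamma0 (x, y))
        (sSup { S | ∃ a b : ℝ, 0 ≤ a ∧ a ≤ b ∧
          ((q, a) : ℝ × ℝ) ∈ WedgeV ∧ ((0, b - a) : ℝ × ℝ) ∈ WedgeV ∧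
          ((x - q, y - b) : ℝ × ℝ) ∈ WedgeV ∧
          S = gamma0 (q, a) + c⁻¹ * gamma0 (0, b - a) + gamma0 (x - q, y - b) }) := by
  set T : Set ℝ := { S | ∃ a b : ℝ, 0 ≤ a ∧ a ≤ b ∧
          ((q, a) : ℝ × ℝ) ∈ WedgeV ∧ ((0, b - a) : ℝ × ℝ) ∈ WedgeV ∧
          ((x - q, y - b) : ℝ × ℝ) ∈ WedgeV ∧
          S = gamma0 (q, a) + c⁻¹ * gamma0 (0, b - a) + gamma0 (x - q, y - b) } with hT
  have hci : 1 ≤ c⁻¹ := (one_le_inv₀ hc.1).mpr hc.2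
  -- The linear bound on `γ₀` with `θ = 1` is additive along the three segments.
  have hTb : BddAbove T := by
    refine ⟨c⁻¹ * (2 * (x + y) + 2 * y), ?_⟩
    rintro S ⟨a, b, -, -, m1, m2, m3, rfl⟩
    have g1 := gamma0_le_linear m1 one_pos
    have g2 := gamma0_le_linear m2 one_pos
    have g3 := gamma0_le_linear m3 one_pos
    have n1 := mul_le_mul_of_nonneg_right hci (gamma0_nonneg (q, a))
    have n3 := mul_le_mul_of_nonneg_right hci (gamma0_nonneg (x - q, y - b))
    have hs : gamma0 (q, a) + gamma0 (0, b - a) + gamma0 (x - q, y - b) ≤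
        2 * (x + y) + 2 * y := by norm_num at g1 g2 g3; linarith
    have := mul_le_mul_of_nonneg_left hs (zero_le_one.trans hci)
    linarith
  have hub : ∀ v ∈ pathValues c q x y, v ≤ max (gamma0 (x, y)) (sSup T) := by
    rintro v ⟨f, hf, hf0, hf1, hV, hd, rfl⟩
    rcases path_value_le hc (q := q) hf hf0 hf1 hV hd with h | ⟨a, b, h0, hab, m1, m2, m3, h⟩
    · exact h.trans (le_max_left _ _)
    · exact h.trans ((le_csSup hTb ⟨a, b, h0, hab, m1, m2, m3, rfl⟩).trans (le_max_right _ _))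
  have hlub : ∀ v ∈ pathValues c q x y, v ≤ GammaQ c q x y := fun v hv => le_csSup ⟨_, hub⟩ hv
  obtain ⟨v, hv, hle⟩ := straight_value hc (q := q) (⟨hy.le, hxy.le⟩ : (x, y) ∈ WedgeV)
  have hstr : gamma0 (x, y) ≤ GammaQ c q x y := hle.trans (hlub v hv)
  apply le_antisymm
  · exact csSup_le ⟨v, hv⟩ hub
  · refine max_le hstr (Real.sSup_le ?_ ((gamma0_nonneg _).trans hstr))
    rintro S ⟨a, b, -, -, m1, m2, m3, rfl⟩
    obtain ⟨w, hw, hle⟩ := threeSeg_value hc m1 m2 m3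
    exact hle.trans (hlub w hw)
end
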